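/- Let $D_i, D_j, D_k$ be three pairwise intersecting closed disks on the Riemann sphere with exterior intersection angles $\Theta_i, \Theta_j, \Theta_k \in [0,\pi)$ (where $\Theta_\mu$ is the angle for the pair not involving $D_\mu$). If $D_i \cap D_j \subset D_k$, then $\Theta_i + \Theta_j \ge \Theta_k + \pi$. -/

import Mathlib

open Real
open scoped RealInnerProductSpace

/-- The geodesic distance between two points of the unit sphere in `ℝ³`. -/
noncomputable def sphDist (x y : EuclideanSpace ℝ (Fin 3)) : ℝ :=
  Real.arccos ⟪x, y⟫

/-- The closed spherical disk with center `z` (a unit vector) and radius `r`. -/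
noncomputable def sphDisk (z : EuclideanSpace ℝ (Fin 3)) (r : ℝ) :
    Set (EuclideanSpace ℝ (Fin 3)) :=
  {x | x ∈ Metric.sphere (0 : EuclideanSpace ℝ (Fin 3)) 1 ∧ sphDist z x ≤ r}

abbrev E3 := EuclideanSpace ℝ (Fin 3)

lemma exists_dir (a b c : E3) : ∃ d : E3, d ≠ 0 ∧ ⟪a, d⟫ = 0 ∧ ⟪b, d⟫ = 0 ∧ ⟪c, d⟫ ≤ 0 := by
  let F : E3 →ₗ[ℝ] (ℝ × ℝ) := ((innerSL ℝ a).toLinearMap).prod ((innerSL ℝ b).toLinearMap)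
  have hk : LinearMap.ker F ≠ ⊥ := by
    apply LinearMap.ker_ne_bot_of_finrank_lt
    simp
  obtain ⟨d, hd, hd0⟩ := (Submodule.ne_bot_iff _).1 hk
  have h : ⟪a, d⟫ = 0 ∧ ⟪b, d⟫ = 0 := by
    have := LinearMap.mem_ker.1 hd
    simpa [F] using this
  rcases le_total ⟪c, d⟫ 0 with h1 | h1
  · exact ⟨d, hd0, h.1, h.2, h1⟩
  · refine ⟨-d, neg_ne_zero.2 hd0, ?_, ?_, ?_⟩ <;> simp [inner_neg_right, h.1, h.2, h1]

lemma exists_on_sphere (x d : E3) (hx : ‖x‖ ≤ 1) (hd : d ≠ 0) :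
    ∃ t : ℝ, 0 ≤ t ∧ ‖x + t • d‖ = 1 := by
  have hd' : 0 < ‖d‖ := norm_pos_iff.2 hd
  have hT : (0 : ℝ) ≤ 2 / ‖d‖ := by positivity
  have hc : ContinuousOn (fun t : ℝ => ‖x + t • d‖) (Set.Icc 0 (2 / ‖d‖)) := by fun_prop
  have := intermediate_value_Icc hT hc
  have hm : (1 : ℝ) ∈ Set.Icc ‖x + (0 : ℝ) • d‖ ‖x + (2 / ‖d‖) • d‖ := by
    constructor
    · simpa using hx
    · have h1 : ‖(2 / ‖d‖) • d‖ = 2 := by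
        rw [norm_smul, Real.norm_of_nonneg hT]; field_simp
      have h2 := norm_sub_le (x + (2 / ‖d‖) • d) x
      rw [add_sub_cancel_left, h1] at h2
      linarith
  obtain ⟨t, ht, h⟩ := this hm
  exact ⟨t, ht.1, h⟩

lemma mem_disk_iff (z x : E3) (r : ℝ) (hz : ‖z‖ = 1) (hr : r ∈ Set.Ioo 0 π) :
    x ∈ sphDisk z r ↔ ‖x‖ = 1 ∧ cos r ≤ ⟪z, x⟫ := by
  unfold sphDisk sphDist
  simp only [Set.mem_ofPred_eq, mem_sphere_zero_iff_norm]
  refine and_congr_right fun hx => ?_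
  have h := abs_real_inner_le_norm z x
  rw [hz, hx, one_mul, abs_le] at h
  constructor
  · intro h1
    have := Real.cos_le_cos_of_nonneg_of_le_pi (Real.arccos_nonneg _) hr.2.le h1
    rwa [Real.cos_arccos h.1 h.2] at this
  · intro h1
    have := Real.arccos_le_arccos h1
    rwa [Real.arccos_cos hr.1.le hr.2.le] at this

lemma ball_inter_sub (a b c : E3) (p q s : ℝ)
    (h : ∀ x : E3, ‖x‖ = 1 → p ≤ ⟪a, x⟫ → q ≤ ⟪b, x⟫ → s ≤ ⟪c, x⟫) (x : E3) (hx : ‖x‖ ≤ 1)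
    (h1 : p ≤ ⟪a, x⟫) (h2 : q ≤ ⟪b, x⟫) : s ≤ ⟪c, x⟫ := by
  obtain ⟨d, hd, ha, hb, hc⟩ := exists_dir a b c
  obtain ⟨t, ht, hn⟩ := exists_on_sphere x d hx hd
  have := h _ hn (by simpa [inner_add_right, inner_smul_right, ha] using h1)
    (by simpa [inner_add_right, inner_smul_right, hb] using h2)
  rw [inner_add_right, real_inner_smul_right] at this
  nlinarith [mul_nonneg ht (neg_nonneg.2 hc)]

/-- A linear form bounded above on an open octant. -/
lemma nonpos_of_bdd (α β γ c : ℝ) (h : ∀ s t u : ℝ, 0 < s → 0 < t → 0 < u →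
    α * s + β * t + γ * u < c) : α ≤ 0 := by
  by_contra hα
  push Not at hα
  have := h ((|c| + |β| + |γ|) / α + 1) 1 1 (by positivity) one_pos one_pos
  have e : α * ((|c| + |β| + |γ|) / α + 1) = |c| + |β| + |γ| + α := by field_simp
  rw [e] at this
  linarith [le_abs_self c, neg_abs_le β, neg_abs_le γ]

lemma farkas (a b c : E3) (p q s : ℝ)
    (h : ∀ x : E3, ‖x‖ ≤ 1 → p ≤ ⟪a, x⟫ → q ≤ ⟪b, x⟫ → s ≤ ⟪c, x⟫) :
    ∃ l m n : ℝ, 0 ≤ l ∧ 0 ≤ m ∧ 0 ≤ n ∧ 0 < l + m + n ∧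
      ∀ x : E3, ‖x‖ ≤ 1 → l * (⟪a, x⟫ - p) + m * (⟪b, x⟫ - q) ≤ n * (⟪c, x⟫ - s) := by
  let K : Set (ℝ × ℝ × ℝ) := Set.Ioi 0 ×ˢ (Set.Ioi 0 ×ˢ Set.Iio 0)
  let G : E3 →ₗ[ℝ] (ℝ × ℝ × ℝ) := ((innerSL ℝ a).toLinearMap).prod
    (((innerSL ℝ b).toLinearMap).prod ((innerSL ℝ c).toLinearMap))
  let M : Set (ℝ × ℝ × ℝ) := (fun y => (-(p, q, s)) + y) '' (G '' Metric.closedBall 0 1)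
  have hK : Convex ℝ K := (convex_Ioi 0).prod ((convex_Ioi 0).prod (convex_Iio 0))
  have hKo : IsOpen K := isOpen_Ioi.prod (isOpen_Ioi.prod isOpen_Iio)
  have hM : Convex ℝ M := ((convex_closedBall 0 1).linear_image G).translate _
  have hmem : ∀ x : E3, ‖x‖ ≤ 1 → (⟪a, x⟫ - p, ⟪b, x⟫ - q, ⟪c, x⟫ - s) ∈ M := by
    intro x hx
    refine ⟨G x, ⟨x, by simpa using hx, rfl⟩, ?_⟩
    simp [G]
    refine ⟨?_, ?_, ?_⟩ <;> ring
  have hdis : Disjoint K M := by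
    rw [Set.disjoint_left]
    rintro _ hk ⟨_, ⟨x, hx, rfl⟩, rfl⟩
    have hx' : ‖x‖ ≤ 1 := by simpa using hx
    simp [K, G] at hk
    have := h x hx' (by linarith [hk.1]) (by linarith [hk.2.1])
    linarith [hk.2.2]
  obtain ⟨f, w, hf1, hf2⟩ := geometric_hahn_banach_open hK hKo hM hdis
  set α := f (1, 0, 0) with hα
  set β := f (0, 1, 0) with hβ
  set γ := f (0, 0, 1) with hγ
  have hf : ∀ x y z : ℝ, f (x, y, z) = α * x + β * y + γ * z := by
    intro x y z
    have : (x, y, z) = x • ((1 : ℝ), (0 : ℝ), (0 : ℝ)) + y • ((0 : ℝ), (1 : ℝ), (0 : ℝ))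
      + z • ((0 : ℝ), (0 : ℝ), (1 : ℝ)) := by simp
    rw [this, map_add, map_add, map_smul, map_smul, map_smul]
    simp only [smul_eq_mul]
    ring
  have key : ∀ s t u : ℝ, 0 < s → 0 < t → 0 < u → α * s + β * t + (-γ) * u < w := by
    intro s t u hs ht hu
    have := hf1 (s, t, -u) (by simp [K, hs, ht, hu])
    rw [hf] at this
    linarith
  have h1 : α ≤ 0 := nonpos_of_bdd α β (-γ) w key
  have h2 : β ≤ 0 := nonpos_of_bdd β α (-γ) w
    (fun s t u hs ht hu => by linarith [key t s u ht hs hu])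
  have h3 : -γ ≤ 0 := nonpos_of_bdd (-γ) α β w
    (fun s t u hs ht hu => by linarith [key t u s ht hu hs])
  have hw : 0 ≤ w := by
    by_contra hw
    push Not at hw
    have hD : 0 < -α - β + γ + 1 := by linarith
    have hε : 0 < -w / (-α - β + γ + 1) := div_pos (by linarith) hD
    set ε := -w / (-α - β + γ + 1) with he
    have e : ε * (-α - β + γ + 1) = -w := by rw [he]; field_simp
    have := key ε ε ε hε hε hε
    nlinarith
  refine ⟨-α, -β, γ, by linarith, by linarith, by linarith, ?_, ?_⟩
  · by_contra hc
    have e1 : α = 0 := by linarith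
    have e2 : β = 0 := by linarith
    have e3 : γ = 0 := by linarith
    have k := key 1 1 1 one_pos one_pos one_pos
    have := hf2 _ (hmem 0 (by simp))
    rw [hf, e1, e2, e3] at this
    rw [e1, e2, e3] at k
    linarith
  · intro x hx
    have := hf2 _ (hmem x hx)
    rw [hf] at this
    linarith

lemma norm_le_of_ball (u : E3) (τ : ℝ) (h : ∀ x : E3, ‖x‖ ≤ 1 → τ ≤ ⟪u, x⟫) : ‖u‖ ≤ -τ := by
  by_cases hu : u = 0
  · have := h 0 (by simp)
    simp at this
    simp [hu, this]
  · have hn : 0 < ‖u‖ := norm_pos_iff.2 hu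
    have := h (-(‖u‖⁻¹ • u)) (by
      rw [norm_neg, norm_smul, norm_inv, norm_norm, inv_mul_cancel₀ hn.ne'])
    rw [inner_neg_right, real_inner_smul_right, real_inner_self_eq_norm_sq] at this
    have e : ‖u‖⁻¹ * ‖u‖ ^ 2 = ‖u‖ := by field_simp
    linarith

lemma trig_final (A B C L M N : ℝ) (hA : A ∈ Set.Ioc 0 π) (hB : B ∈ Set.Ioc 0 π)
    (hC : C ∈ Set.Ioc 0 π) (hL : 0 ≤ L) (hM : 0 ≤ M) (hN : 0 < N)
    (hQ : N ^ 2 + L ^ 2 + M ^ 2 - 2 * N * L * cos B - 2 * N * M * cos A + 2 * L * M * cos C ≤ 0) :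
    A + B ≤ C := by
  by_contra hlt
  push Not at hlt
  have aux : ∀ X ∈ Set.Ioc 0 π, cos X < 1 := by
    intro X hX
    have := Real.cos_lt_cos_of_nonneg_of_le_pi le_rfl hX.2 hX.1
    simpa using this
  have hcA := aux A hA
  have hcB := aux B hB
  rcases hL.eq_or_lt with rfl | hL
  · rcases hM.eq_or_lt with rfl | hM
    · nlinarith
    · nlinarith [sq_nonneg (N - M), mul_pos (mul_pos hN hM) (sub_pos.2 hcA)]
  rcases hM.eq_or_lt with rfl | hM
  · nlinarith [sq_nonneg (N - L), mul_pos (mul_pos hN hL) (sub_pos.2 hcB)]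
  obtain ⟨A', B', hA0, hAA, hB0, hBB, hs⟩ : ∃ A' B', 0 ≤ A' ∧ A' ≤ A ∧ 0 ≤ B' ∧ B' ≤ B ∧
      A' + B' = C := by
    rcases le_total A C with h | h
    · exact ⟨A, C - A, hA.1.le, le_rfl, by linarith, by linarith, by ring⟩
    · exact ⟨C, 0, hC.1.le, h, le_rfl, hB.1.le, by ring⟩
  have c1 : cos A ≤ cos A' := Real.cos_le_cos_of_nonneg_of_le_pi hA0 hA.2 hAA
  have c2 : cos B ≤ cos B' := Real.cos_le_cos_of_nonneg_of_le_pi hB0 hB.2 hBB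
  have strict : 0 < N * L * (cos B' - cos B) + N * M * (cos A' - cos A) := by
    have p1 : 0 < N * L := mul_pos hN hL
    have p2 : 0 < N * M := mul_pos hN hM
    rcases hAA.lt_or_eq with h | h
    · have := Real.cos_lt_cos_of_nonneg_of_le_pi hA0 hA.2 h
      nlinarith [mul_pos p2 (sub_pos.2 this), mul_nonneg p1.le (sub_nonneg.2 c2)]
    · have hb : B' < B := by linarith
      have := Real.cos_lt_cos_of_nonneg_of_le_pi hB0 hB.2 hb
      nlinarith [mul_pos p1 (sub_pos.2 this), mul_nonneg p2.le (sub_nonneg.2 c1)]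
  have sos : N ^ 2 + L ^ 2 + M ^ 2 - 2 * N * L * cos B' - 2 * N * M * cos A' + 2 * L * M * cos C
      = (N - L * cos B' - M * cos A') ^ 2 + (L * sin B' - M * sin A') ^ 2 := by
    rw [← hs, cos_add]
    linear_combination (-L ^ 2) * sin_sq_add_cos_sq B' + (-M ^ 2) * sin_sq_add_cos_sq A'
  nlinarith [sq_nonneg (N - L * cos B' - M * cos A'), sq_nonneg (L * sin B' - M * sin A')]

lemma degen_eq (L M c : ℝ) (hL : 0 ≤ L) (hM : 0 ≤ M) (hc : c ≤ 1)
    (h : L ^ 2 + M ^ 2 - 2 * L * M * c ≤ 0) : L = M := by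
  have h1 := mul_nonneg (mul_nonneg hL hM) (sub_nonneg.2 hc)
  have h2 : (L - M) ^ 2 ≤ 0 := by linarith
  have h3 : L - M = 0 := pow_eq_zero_iff two_ne_zero |>.1 (le_antisymm h2 (sq_nonneg _))
  linarith

lemma degen_one (L c : ℝ) (hL : 0 < L) (hc : c ≤ 1)
    (h : L ^ 2 + L ^ 2 - 2 * L * L * c ≤ 0) : c = 1 := by
  have h1 : (L * L) * (1 - c) ≤ 0 := by linarith
  have := nonpos_of_mul_nonpos_right h1 (mul_pos hL hL)
  linarith

/-- Lemma 2.6 (first part): if three pairwise intersecting disks on the sphere have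
exterior intersection angles `Θ_i, Θ_j, Θ_k ∈ [0,π)` and `D_i ∩ D_j ⊆ D_k`, then
`Θ_i + Θ_j ≥ Θ_k + π`. -/
theorem angle_relation_of_inter_subset
    (zi zj zk : EuclideanSpace ℝ (Fin 3))
    (hzi : zi ∈ Metric.sphere (0 : EuclideanSpace ℝ (Fin 3)) 1)
    (hzj : zj ∈ Metric.sphere (0 : EuclideanSpace ℝ (Fin 3)) 1)
    (hzk : zk ∈ Metric.sphere (0 : EuclideanSpace ℝ (Fin 3)) 1)
    (ri rj rk Θi Θj Θk : ℝ)
    (hri : ri ∈ Set.Ioo 0 π) (hrj : rj ∈ Set.Ioo 0 π) (hrk : rk ∈ Set.Ioo 0 π)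
    (hΘi : Θi ∈ Set.Ico 0 π) (hΘj : Θj ∈ Set.Ico 0 π) (hΘk : Θk ∈ Set.Ico 0 π)
    -- exterior intersection angles: `Θ_k` for the pair `(D_i, D_j)`, etc.
    (hij : cos (sphDist zi zj) = cos ri * cos rj - cos Θk * sin ri * sin rj)
    (hjk : cos (sphDist zj zk) = cos rj * cos rk - cos Θi * sin rj * sin rk)
    (hki : cos (sphDist zk zi) = cos rk * cos ri - cos Θj * sin rk * sin ri)
    -- the disks pairwise intersect
    (hmij : (sphDisk zi ri ∩ sphDisk zj rj).Nonempty)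
    (hmjk : (sphDisk zj rj ∩ sphDisk zk rk).Nonempty)
    (hmki : (sphDisk zk rk ∩ sphDisk zi ri).Nonempty)
    (hsub : sphDisk zi ri ∩ sphDisk zj rj ⊆ sphDisk zk rk) :
    Θi + Θj ≥ Θk + π := by
  have ni : ‖zi‖ = 1 := by simpa using hzi
  have nj : ‖zj‖ = 1 := by simpa using hzj
  have nk : ‖zk‖ = 1 := by simpa using hzk
  have cosd : ∀ x y : E3, ‖x‖ = 1 → ‖y‖ = 1 → cos (sphDist x y) = ⟪x, y⟫ := by
    intro x y hx hy
    have h := abs_real_inner_le_norm x y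
    rw [hx, hy, one_mul, abs_le] at h
    exact Real.cos_arccos h.1 h.2
  rw [cosd _ _ ni nj] at hij
  rw [cosd _ _ nj nk] at hjk
  rw [cosd _ _ nk ni] at hki
  have hsub' : ∀ x : E3, ‖x‖ = 1 → cos ri ≤ ⟪zi, x⟫ → cos rj ≤ ⟪zj, x⟫ → cos rk ≤ ⟪zk, x⟫ := by
    intro x hx h1 h2
    exact ((mem_disk_iff zk x rk nk hrk).1 (hsub ⟨(mem_disk_iff zi x ri ni hri).2 ⟨hx, h1⟩,
      (mem_disk_iff zj x rj nj hrj).2 ⟨hx, h2⟩⟩)).2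
  obtain ⟨l, m, n, hl, hm, hn, hpos, hF⟩ := farkas zi zj zk _ _ _ (ball_inter_sub zi zj zk _ _ _ hsub')
  have si : 0 < sin ri := sin_pos_of_pos_of_lt_pi hri.1 hri.2
  have sj : 0 < sin rj := sin_pos_of_pos_of_lt_pi hrj.1 hrj.2
  have sk : 0 < sin rk := sin_pos_of_pos_of_lt_pi hrk.1 hrk.2
  have hu : ‖n • zk - l • zi - m • zj‖ ≤ -(n * cos rk - l * cos ri - m * cos rj) := by
    apply norm_le_of_ball
    intro x hx
    have := hF x hx
    simp only [inner_sub_left, real_inner_smul_left]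
    linarith
  have qi := sin_sq_add_cos_sq ri
  have qj := sin_sq_add_cos_sq rj
  have qk := sin_sq_add_cos_sq rk
  have ii : ⟪zi, zi⟫ = 1 := by rw [real_inner_self_eq_norm_sq, ni]; norm_num
  have jj : ⟪zj, zj⟫ = 1 := by rw [real_inner_self_eq_norm_sq, nj]; norm_num
  have kk : ⟪zk, zk⟫ = 1 := by rw [real_inner_self_eq_norm_sq, nk]; norm_num
  have hji : ⟪zj, zi⟫ = cos ri * cos rj - cos Θk * sin ri * sin rj := by
    rw [real_inner_comm]; exact hij
  have hkj : ⟪zk, zj⟫ = cos rj * cos rk - cos Θi * sin rj * sin rk := by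
    rw [real_inner_comm]; exact hjk
  have hik : ⟪zi, zk⟫ = cos rk * cos ri - cos Θj * sin rk * sin ri := by
    rw [real_inner_comm]; exact hki
  have husq := pow_le_pow_left₀ (norm_nonneg _) hu 2
  rw [← real_inner_self_eq_norm_sq] at husq
  simp only [inner_sub_left, inner_sub_right, real_inner_smul_left, real_inner_smul_right,
    ii, jj, kk, hij, hji, hjk, hkj, hki, hik] at husq
  have hQ : (n * sin rk) ^ 2 + (l * sin ri) ^ 2 + (m * sin rj) ^ 2
      - 2 * (n * sin rk) * (l * sin ri) * cos (π - Θj)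
      - 2 * (n * sin rk) * (m * sin rj) * cos (π - Θi)
      + 2 * (l * sin ri) * (m * sin rj) * cos (π - Θk) ≤ 0 := by
    rw [cos_pi_sub, cos_pi_sub, cos_pi_sub]
    linear_combination husq + n ^ 2 * qk + l ^ 2 * qi + m ^ 2 * qj
  have hL : 0 ≤ l * sin ri := by positivity
  have hM : 0 ≤ m * sin rj := by positivity
  rcases hn.eq_or_lt with rfl | hn
  · -- degenerate case
    have hck : cos Θk ≤ 1 := cos_le_one _
    rw [cos_pi_sub, cos_pi_sub, cos_pi_sub] at hQ
    have hLM : l * sin ri = m * sin rj :=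
      degen_eq _ _ _ hL hM hck (by linear_combination hQ)
    have hlp : 0 < l * sin ri := by
      rcases hL.eq_or_lt with h | h
      · exfalso
        have h1 : l = 0 := by
          rcases mul_eq_zero.1 h.symm with h | h
          · exact h
          · exact absurd h si.ne'
        have h2 : m = 0 := by
          rcases mul_eq_zero.1 (hLM.symm.trans h.symm) with h | h
          · exact h
          · exact absurd h sj.ne'
        rw [h1, h2] at hpos
        linarith
      · exact h
    have hc1 : cos Θk = 1 := by
      rw [← hLM] at hQ
      exact degen_one _ _ hlp hck (by linear_combination hQ)
    have hk0 : Θk = 0 := by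
      have := Real.arccos_cos hΘk.1 hΘk.2.le
      rw [hc1, Real.arccos_one] at this
      exact this.symm
    set y := l • zi + m • zj with hy
    set t := l * cos ri + m * cos rj with ht
    have hyle : ‖y‖ ≤ t := by
      have : (0 : ℝ) • zk - l • zi - m • zj = -y := by rw [hy, zero_smul]; abel
      rw [this, norm_neg] at hu
      linarith
    have hysq : ‖y‖ ^ 2 = t ^ 2 := by
      rw [← real_inner_self_eq_norm_sq, hy]
      simp only [inner_add_left, inner_add_right, real_inner_smul_left, real_inner_smul_right,
        ii, jj, hij, hji, hc1]
      linear_combination (l * sin ri - m * sin rj) * hLM - l ^ 2 * qi - m ^ 2 * qj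
    have ht0 : 0 ≤ t := (norm_nonneg y).trans hyle
    have hyt : ‖y‖ = t := by
      rwa [sq_eq_sq₀ (norm_nonneg y) ht0] at hysq
    have hzk' : t * cos rk ≤ ⟪zk, y⟫ := by
      rcases ht0.eq_or_lt with h | h
      · have : y = 0 := by rw [← norm_eq_zero, hyt, ← h]
        rw [← h, this]; simp
      · have e1 : ⟪zi, y⟫ = t * cos ri := by
          simp only [hy, inner_add_right, real_inner_smul_right, ii, hij, hc1]
          linear_combination sin ri * hLM - l * qi
        have e2 : ⟪zj, y⟫ = t * cos rj := by
          simp only [hy, inner_add_right, real_inner_smul_right, jj, hji, hc1]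
          linear_combination (-sin rj) * hLM - m * qj
        have := hsub' (t⁻¹ • y)
          (by rw [norm_smul, norm_inv, hyt, Real.norm_of_nonneg ht0, inv_mul_cancel₀ h.ne'])
          (by rw [real_inner_smul_right, e1, inv_mul_cancel_left₀ h.ne'])
          (by rw [real_inner_smul_right, e2, inv_mul_cancel_left₀ h.ne'])
        rw [real_inner_smul_right] at this
        have h2 := mul_le_mul_of_nonneg_left this ht0
        rwa [mul_inv_cancel_left₀ h.ne'] at h2
    simp only [hy, inner_add_right, real_inner_smul_right, hki, hkj] at hzk'
    have hfin : (l * sin ri * sin rk) * (cos Θi + cos Θj) ≤ 0 := by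
      linear_combination hzk' + cos Θi * sin rk * hLM
    have hsum : cos Θi ≤ cos (π - Θj) := by
      rw [cos_pi_sub]
      have := nonpos_of_mul_nonpos_right hfin (mul_pos hlp sk)
      linarith
    rw [hk0]
    by_contra hcon
    push Not at hcon
    have := Real.cos_lt_cos_of_nonneg_of_le_pi hΘi.1 (by linarith [hΘj.1] : π - Θj ≤ π)
      (by linarith)
    linarith
  · have := trig_final (π - Θi) (π - Θj) (π - Θk) (l * sin ri) (m * sin rj) (n * sin rk)
      ⟨by linarith [hΘi.2], by linarith [hΘi.1]⟩ ⟨by linarith [hΘj.2], by linarith [hΘj.1]⟩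
      ⟨by linarith [hΘk.2], by linarith [hΘk.1]⟩ hL hM (mul_pos hn sk) hQ
    linarith
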